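/- The polynomial f = y^d + x^k z^{d-k} in ℂ[x,y,z] is irreducible if and only if gcd(k, d) = 1, for integers 1 ≤ k < d. -/

import Mathlib

open MvPolynomial

/-!
Write `f = y ^ d - a` with `a` the monomial `-x ^ k z ^ (d - k)`, as a polynomial in `y`. A monic
factor of `y ^ d - a` of degree `n` has constant term, up to sign, a product of `n` of the `d`-th
roots of `a`, so the `d`-th power of this constant term is `± a ^ n`. Comparing exponents, `d`
divides `n` times the gcd of the exponents of `a`; when `d` is prime to that gcd, `n` is `0` or `d`.
Conversely a common divisor `n > 1` of `d` and the exponents makes `a` an `n`-th power, as the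
coefficient field is algebraically closed, and `b - c ∣ b ^ n - c ^ n` gives a factorization.
-/

section UnivariateBinomials

open scoped Polynomial

variable {R : Type*} [CommRing R] [IsDomain R]

lemma coeff_zero_pow_eq_of_splits_of_dvd_X_pow_sub_C {d : ℕ} {a : R} {g : R[X]} (hs : g.Splits)
    (hg : g.Monic) (h : g ∣ Polynomial.X ^ d - Polynomial.C a) :
    ((-1) ^ g.natDegree * g.coeff 0) ^ d = a ^ g.natDegree := by
  have hroots : ∀ x ∈ g.roots, x ^ d = a := fun x hx ↦ by
    simpa [sub_eq_zero] using (Polynomial.isRoot_of_mem_roots hx).dvd h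
  calc ((-1) ^ g.natDegree * g.coeff 0) ^ d = g.roots.prod ^ d := by
        rw [hs.coeff_zero_eq_prod_roots_of_monic hg, ← mul_assoc, ← mul_pow, neg_one_mul, neg_neg,
          one_pow, one_mul]
    _ = (g.roots.map (· ^ d)).prod := by rw [Multiset.prod_map_pow, Multiset.map_id']
    _ = a ^ g.natDegree := by
        rw [Multiset.map_congr rfl hroots, Multiset.map_const', Multiset.prod_replicate,
          hs.natDegree_eq_card_roots]

lemma coeff_zero_pow_eq_of_dvd_X_pow_sub_C {d : ℕ} {a : R} {g : R[X]} (hg : g.Monic)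
    (h : g ∣ Polynomial.X ^ d - Polynomial.C a) :
    ((-1) ^ g.natDegree * g.coeff 0) ^ d = a ^ g.natDegree := by
  let φ : R →+* AlgebraicClosure (FractionRing R) :=
    (algebraMap (FractionRing R) _).comp (algebraMap R (FractionRing R))
  have hφ : Function.Injective φ :=
    (algebraMap (FractionRing R) _).injective.comp (IsFractionRing.injective R (FractionRing R))
  have hdvd : g.map φ ∣ Polynomial.X ^ d - Polynomial.C (φ a) := by
    simpa using Polynomial.map_dvd φ h
  apply hφ
  simpa [hg.natDegree_map] using
    coeff_zero_pow_eq_of_splits_of_dvd_X_pow_sub_C (IsAlgClosed.splits _) (hg.map φ) hdvd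

theorem irreducible_X_pow_sub_C_of_forall_pow_eq_pow {d : ℕ} (hd : d ≠ 0) {a : R}
    (h : ∀ (b : R) (n : ℕ), b ^ d = a ^ n → d ∣ n) :
    Irreducible (Polynomial.X ^ d - Polynomial.C a) := by
  have hdeg : (Polynomial.X ^ d - Polynomial.C a).natDegree = d :=
    Polynomial.natDegree_X_pow_sub_C
  have hne : Polynomial.X ^ d - Polynomial.C a ≠ 1 := fun h1 ↦
    hd (by rw [← hdeg, h1, Polynomial.natDegree_one])
  rw [(Polynomial.monic_X_pow_sub_C a hd).irreducible_iff_lt_natDegree_lt hne, hdeg]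
  intro g hg hlt hdvd
  obtain ⟨hpos, hle⟩ := Finset.mem_Ioc.mp hlt
  have := Nat.le_of_dvd hpos (h _ _ (coeff_zero_pow_eq_of_dvd_X_pow_sub_C hg hdvd))
  lia

theorem not_irreducible_X_pow_mul_sub_C_pow {m n : ℕ} (hm : m ≠ 0) (hn : n ≠ 1) (b : R) :
    ¬ Irreducible (Polynomial.X ^ (m * n) - Polynomial.C (b ^ n)) := by
  intro hirr
  obtain ⟨q, hq⟩ : Polynomial.X ^ m - Polynomial.C b ∣
      Polynomial.X ^ (m * n) - Polynomial.C (b ^ n) := by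
    simpa only [pow_mul, map_pow] using
      sub_dvd_pow_sub_pow (Polynomial.X ^ m) (Polynomial.C b) n
  have hmonic := Polynomial.monic_X_pow_sub_C b hm
  have hdeg : m * n = m + q.natDegree := by
    have := congrArg Polynomial.natDegree hq
    rwa [hmonic.natDegree_mul' (right_ne_zero_of_mul (hq ▸ hirr.ne_zero)),
      Polynomial.natDegree_X_pow_sub_C, Polynomial.natDegree_X_pow_sub_C] at this
  rcases hirr.isUnit_or_isUnit hq with hunit | hunit
  · have := Polynomial.natDegree_eq_zero_of_isUnit hunit
    rw [Polynomial.natDegree_X_pow_sub_C] at this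
    exact hm this
  · rw [Polynomial.natDegree_eq_zero_of_isUnit hunit, add_zero, Nat.mul_eq_left hm] at hdeg
    exact hn hdeg

end UnivariateBinomials

section Monomials

variable {σ : Type*}

lemma dvd_mul_gcd_of_pow_eq_monomial_pow {R : Type*} [CommRing R] [IsDomain R] {e : σ →₀ ℕ}
    {c : R} (hc : c ≠ 0) {d n : ℕ} {b : MvPolynomial σ R} (h : b ^ d = monomial e c ^ n) :
    d ∣ n * e.support.gcd e := by
  have hdegree (j : σ) : d * degreeOf j b = n * e j := by
    have hpow : degreeOf j (b ^ d) = d * degreeOf j b := by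
      rcases eq_or_ne d 0 with rfl | hd
      · simp
      · have hb : b ≠ 0 := by
          rintro rfl
          exact pow_ne_zero n (monomial_eq_zero.not.mpr hc) (by rw [← h, zero_pow hd])
        exact degreeOf_pow_eq j b d hb
    rw [← hpow, h, degreeOf_pow_eq _ _ _ (monomial_eq_zero.not.mpr hc),
      degreeOf_monomial_eq _ _ hc]
  rw [← normalize_eq n, ← Finset.gcd_mul_left]
  exact Finset.dvd_gcd fun j _ ↦ ⟨degreeOf j b, (hdegree j).symm⟩

lemma exists_pow_eq_monomial {K : Type*} [Field K] [IsAlgClosed K] {n : ℕ} (hn : n ≠ 0)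
    {e : σ →₀ ℕ} (h : n ∣ e.support.gcd e) (c : K) :
    ∃ b : MvPolynomial σ K, b ^ n = monomial e c := by
  obtain ⟨z, hz⟩ := IsAlgClosed.exists_pow_nat_eq c (Nat.pos_of_ne_zero hn)
  refine ⟨monomial (e.mapRange (· / n) (Nat.zero_div n)) z, ?_⟩
  rw [monomial_pow, hz]
  refine congrArg (monomial · c) (Finsupp.ext fun j ↦ ?_)
  by_cases hj : j ∈ e.support
  · simpa using Nat.mul_div_cancel' (Finset.dvd_gcd_iff.mp h j hj)
  · simp [Finsupp.notMem_support_iff.mp hj]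

theorem irreducible_X_pow_sub_C_monomial_iff {K : Type*} [Field K] [IsAlgClosed K] {d : ℕ}
    (hd : d ≠ 0) (e : σ →₀ ℕ) {c : K} (hc : c ≠ 0) :
    Irreducible (Polynomial.X ^ d - Polynomial.C (monomial e c)) ↔
      d.Coprime (e.support.gcd e) := by
  constructor
  · intro hirr
    by_contra hgcd
    obtain ⟨m, hm⟩ := Nat.gcd_dvd_left d (e.support.gcd e)
    obtain ⟨b, hb⟩ := exists_pow_eq_monomial (Nat.gcd_ne_zero_left hd)
      (Nat.gcd_dvd_right d (e.support.gcd e)) c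
    have hm0 : m ≠ 0 := by rintro rfl; exact hd hm
    apply not_irreducible_X_pow_mul_sub_C_pow hm0 hgcd b
    rwa [hb, mul_comm, ← hm]
  · exact fun hcop ↦ irreducible_X_pow_sub_C_of_forall_pow_eq_pow hd fun b n h ↦
      hcop.dvd_of_dvd_mul_right (dvd_mul_gcd_of_pow_eq_monomial_pow hc h)

lemma gcd_support_subtypeDomain {e : σ →₀ ℕ} {p : σ → Prop} (he : ∀ j ∈ e.support, p j) :
    (e.subtypeDomain p).support.gcd (e.subtypeDomain p) = e.support.gcd e := by
  refine Nat.dvd_antisymm (Finset.dvd_gcd fun j hj ↦ ?_) (Finset.dvd_gcd fun j hj ↦ ?_)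
  · exact Finset.gcd_dvd (f := e.subtypeDomain p) (b := ⟨j, he j hj⟩) (by simpa using hj)
  · exact Finset.gcd_dvd (f := e) (b := j.1) (by simpa using hj)

lemma gcd_support_eq_gcd_of_subset {e : σ →₀ ℕ} {s : Finset σ} (h : e.support ⊆ s) :
    e.support.gcd e = s.gcd e := by
  refine Nat.dvd_antisymm (Finset.dvd_gcd fun j _ ↦ ?_) (Finset.gcd_mono h)
  by_cases hj : j ∈ e.support
  · exact Finset.gcd_dvd hj
  · simp [Finsupp.notMem_support_iff.mp hj]

lemma gcd_support_single_add_single {i j : σ} (hij : i ≠ j) (k m : ℕ) :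
    (Finsupp.single i k + Finsupp.single j m).support.gcd
      (Finsupp.single i k + Finsupp.single j m) = k.gcd m := by
  classical
  have hsub : (Finsupp.single i k + Finsupp.single j m).support ⊆ {i, j} :=
    Finsupp.support_add.trans (Finset.union_subset_union Finsupp.support_single_subset
      Finsupp.support_single_subset)
  rw [gcd_support_eq_gcd_of_subset hsub, Finset.gcd_insert, Finset.gcd_singleton]
  simp [hij, hij.symm, gcd_eq_nat_gcd]

theorem irreducible_X_pow_add_monomial_iff {K : Type*} [Field K] [IsAlgClosed K] {i : σ} {d : ℕ}
    (hd : d ≠ 0) {e : σ →₀ ℕ} (hi : e i = 0) {c : K} (hc : c ≠ 0) :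
    Irreducible (X i ^ d + monomial e c) ↔ d.Coprime (e.support.gcd e) := by
  classical
  let φ := (renameEquiv K (Equiv.optionSubtypeNe i).symm).trans (optionEquivLeft K _)
  have hφ : φ (X i ^ d + monomial e c) =
      Polynomial.X ^ d - Polynomial.C (monomial (e.subtypeDomain (· ≠ i)) (-c)) := by
    have hX : φ (X i) = Polynomial.X := by simp [φ]
    have hmonomial : φ (monomial e c) =
        Polynomial.C (monomial (e.subtypeDomain (· ≠ i)) c) := by
      have hnone : e.mapDomain (Equiv.optionSubtypeNe i).symm none = 0 := by
        simp [Finsupp.mapDomain_equiv_apply, hi]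
      have hsome : (e.mapDomain (Equiv.optionSubtypeNe i).symm).some =
          e.subtypeDomain (· ≠ i) := by
        ext j
        simp [Finsupp.mapDomain_equiv_apply]
      rw [AlgEquiv.trans_apply, renameEquiv_apply, rename_monomial, optionEquivLeft_monomial,
        hnone, hsome, Polynomial.monomial_zero_left]
    rw [map_add, map_pow, hX, hmonomial, map_neg, map_neg, sub_neg_eq_add]
  have hsupp : ∀ j ∈ e.support, j ≠ i := by
    rintro j hj rfl
    exact Finsupp.mem_support_iff.mp hj hi
  rw [← MulEquiv.irreducible_iff φ, hφ,
    irreducible_X_pow_sub_C_monomial_iff hd _ (neg_ne_zero.mpr hc),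
    gcd_support_subtypeDomain hsupp]

end Monomials

theorem binomial_curve_irreducible_iff_general {K σ : Type*} [Field K] [IsAlgClosed K] {i j l : σ}
    (hij : i ≠ j) (hil : i ≠ l) (hjl : j ≠ l) {d : ℕ} (hd : d ≠ 0) (k m : ℕ) :
    Irreducible (X i ^ d + X j ^ k * X l ^ m : MvPolynomial σ K) ↔ d.Coprime (k.gcd m) := by
  have hmonomial : (X j ^ k * X l ^ m : MvPolynomial σ K) =
      monomial (Finsupp.single j k + Finsupp.single l m) 1 := by
    rw [X_pow_eq_monomial, X_pow_eq_monomial, monomial_mul, one_mul]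
  rw [hmonomial, irreducible_X_pow_add_monomial_iff hd (by simp [hij, hil]) one_ne_zero,
    gcd_support_single_add_single hjl]

theorem binomial_curve_irreducible_iff (d k : ℕ) (hk1 : 1 ≤ k) (hkd : k < d) :
    Irreducible ((X 1 ^ d + X 0 ^ k * X 2 ^ (d - k) : MvPolynomial (Fin 3) ℂ))
      ↔ Nat.gcd k d = 1 := by
  rw [binomial_curve_irreducible_iff_general (by decide) (by decide) (by decide) (by lia),
    Nat.gcd_sub_self_right hkd.le, Nat.coprime_iff_gcd_eq_one, Nat.gcd_gcd_self_right_right]
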